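/- arXiv:1707.02338 — 4 statements merged into one kernel-verified Lean document; each statement's English description precedes it below -/
import Mathlib

section
/- For all natural numbers p and q, the geometric algebra G_{p+1,q+1} is isomorphic as an ℝ-algebra to the algebra of 2×2 matrices with entries in G_{p,q}: G_{p+1,q+1} ≃ₐ[ℝ] Matrix (Fin 2) (Fin 2) G_{p,q}. -/
noncomputable section

/-- The quadratic form of signature `(p, q)` on `Fin (p + q) → ℝ`:
`Q_{p,q}(x) = Σ_{i<p} x_i² − Σ_{p≤i<p+q} x_i²`. -/
def Q (p q : ℕ) : QuadraticForm ℝ (Fin (p + q) → ℝ) :=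
  QuadraticMap.weightedSumSquares ℝ (fun i : Fin (p + q) => if (i : ℕ) < p then (1 : ℝ) else -1)

/-- The geometric algebra `G_{p,q}`, the Clifford algebra of `Q p q`. -/
abbrev G (p q : ℕ) : Type := CliffordAlgebra (Q p q)

set_option linter.unusedSimpArgs false

section Abstract

variable {V : Type*} [AddCommGroup V] [Module ℝ V]

/-- The algebra hom out of a matrix algebra determined by matrix units. -/
def matHom {A B : Type*} [Ring A] [Ring B] [Algebra ℝ A] [Algebra ℝ B] (φ : A →ₐ[ℝ] B) (N M : B)
    (hN : N * N = 0) (hM : M * M = 0) (h1 : N * M + M * N = 1)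
    (cN : ∀ a, N * φ a = φ a * N) (cM : ∀ a, M * φ a = φ a * M) :
    Matrix (Fin 2) (Fin 2) A →ₐ[ℝ] B :=
  AlgHom.ofLinearMap
    { toFun := fun X => φ (X 0 0) * (N * M) + φ (X 0 1) * N + φ (X 1 0) * M + φ (X 1 1) * (M * N)
      map_add' := by
        intro X Y
        simp only [Matrix.add_apply, map_add, add_mul]
        abel
      map_smul' := by
        intro r X
        simp only [Matrix.smul_apply, map_smul, smul_mul_assoc, smul_add, RingHom.id_apply] }
    (by simp [h1])
    (by
      intro X Y
      have n2 : ∀ b, N * (N * b) = 0 := fun b => by rw [← mul_assoc, hN, zero_mul]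
      have m2 : ∀ b, M * (M * b) = 0 := fun b => by rw [← mul_assoc, hM, zero_mul]
      have cN' : ∀ a b, N * (φ a * b) = φ a * (N * b) := fun a b => by
        rw [← mul_assoc, cN, mul_assoc]
      have cM' : ∀ a b, M * (φ a * b) = φ a * (M * b) := fun a b => by
        rw [← mul_assoc, cM, mul_assoc]
      have nmn : N * (M * N) = N := by
        have := congrArg (N * ·) h1
        simpa [mul_add, n2] using this
      have mnm : M * (N * M) = M := by
        have := congrArg (M * ·) h1
        simpa [mul_add, m2] using this
      simp only [LinearMap.coe_mk, AddHom.coe_mk, Matrix.mul_apply, Fin.sum_univ_two, map_add,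
        map_mul, mul_add, add_mul, mul_assoc, cN', cM', n2, m2, hN, hM, nmn, mnm, mul_zero,
        add_zero, zero_add]
      abel)

/-- The generator map. -/
def genMap (Q₀ : QuadraticForm ℝ V) :
    V × ℝ × ℝ →ₗ[ℝ] Matrix (Fin 2) (Fin 2) (CliffordAlgebra Q₀) where
  toFun x := !![CliffordAlgebra.ι Q₀ x.1, algebraMap ℝ _ (x.2.1 + x.2.2);
    algebraMap ℝ _ (x.2.1 - x.2.2), - CliffordAlgebra.ι Q₀ x.1]
  map_add' x y := by
    ext i j
    fin_cases i <;> fin_cases j <;> simp <;> abel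
  map_smul' r x := by
    ext i j
    fin_cases i <;> fin_cases j <;> simp [Algebra.smul_def, mul_add, mul_sub]

theorem abstract_iso (Q₀ : QuadraticForm ℝ V) (Q₁ : QuadraticForm ℝ (V × ℝ × ℝ))
    (hQ : ∀ v a b, Q₁ (v, a, b) = Q₀ v + a * a - b * b) :
    Nonempty (CliffordAlgebra Q₁ ≃ₐ[ℝ] Matrix (Fin 2) (Fin 2) (CliffordAlgebra Q₀)) := by
  have hg : ∀ x, genMap Q₀ x * genMap Q₀ x = algebraMap ℝ _ (Q₁ x) := by
    rintro ⟨v, a, b⟩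
    rw [hQ]
    ext i j
    fin_cases i <;> fin_cases j <;>
      simp [genMap, Matrix.mul_apply, Fin.sum_univ_two, Matrix.algebraMap_matrix_apply,
        -map_add, -map_sub, ← map_mul, Algebra.commutes]
    · rw [← map_add]; congr 1; ring
    · rw [← map_add]; congr 1; ring
  let Φ := CliffordAlgebra.lift Q₁ ⟨genMap Q₀, hg⟩
  have hΦ : ∀ x, Φ (CliffordAlgebra.ι Q₁ x) = genMap Q₀ x := fun x => by simp [Φ]
  let e := CliffordAlgebra.ι Q₁ (0, 1, 0)
  let f := CliffordAlgebra.ι Q₁ (0, 0, 1)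
  let j : V →ₗ[ℝ] CliffordAlgebra Q₁ := CliffordAlgebra.ι Q₁ ∘ₗ LinearMap.inl ℝ V (ℝ × ℝ)
  have hj : ∀ v, j v = CliffordAlgebra.ι Q₁ (v, 0, 0) := fun v => rfl
  have hΦe : Φ e = !![0, 1; 1, 0] := by simp [e, hΦ, genMap]
  have hΦf : Φ f = !![0, 1; -1, 0] := by simp [f, hΦ, genMap]
  have hΦj : ∀ v, Φ (j v) = !![CliffordAlgebra.ι Q₀ v, 0; 0, -CliffordAlgebra.ι Q₀ v] := by
    intro v; simp [hj, hΦ, genMap]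
  have ee : e * e = 1 := by simp [e, CliffordAlgebra.ι_sq_scalar, hQ]
  have ff : f * f = -1 := by simp [f, CliffordAlgebra.ι_sq_scalar, hQ]
  have jj : ∀ v, j v * j v = algebraMap ℝ _ (Q₀ v) := fun v => by
    simp [hj, CliffordAlgebra.ι_sq_scalar, hQ]
  have anti : ∀ x y, Q₁ (x + y) = Q₁ x + Q₁ y →
      CliffordAlgebra.ι Q₁ x * CliffordAlgebra.ι Q₁ y =
        -(CliffordAlgebra.ι Q₁ y * CliffordAlgebra.ι Q₁ x) := by
    intro x y h
    have := CliffordAlgebra.ι_mul_ι_add_swap (Q := Q₁) x y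
    rw [QuadraticMap.polar, h] at this
    rw [eq_neg_iff_add_eq_zero, this]
    simp
  have fe : f * e = -(e * f) := anti _ _ (by simp [hQ]; try ring)
  have ej : ∀ v, e * j v = -(j v * e) := fun v => anti _ _ (by simp [hQ]; try ring)
  have fj : ∀ v, f * j v = -(j v * f) := fun v => anti _ _ (by simp [hQ]; try ring)
  have ee' : ∀ b, e * (e * b) = b := fun b => by rw [← mul_assoc, ee, one_mul]
  have ff' : ∀ b, f * (f * b) = -b := fun b => by rw [← mul_assoc, ff, neg_one_mul]
  have fe' : ∀ b, f * (e * b) = -(e * (f * b)) := fun b => by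
    rw [← mul_assoc, fe, neg_mul, mul_assoc]
  have ej' : ∀ v b, e * (j v * b) = -(j v * (e * b)) := fun v b => by
    rw [← mul_assoc, ej, neg_mul, mul_assoc]
  have fj' : ∀ v b, f * (j v * b) = -(j v * (f * b)) := fun v b => by
    rw [← mul_assoc, fj, neg_mul, mul_assoc]
  let g : V →ₗ[ℝ] CliffordAlgebra Q₁ := (LinearMap.mulRight ℝ (f * e)) ∘ₗ j
  have hgv : ∀ v, g v = j v * (f * e) := fun v => rfl
  let φ := CliffordAlgebra.lift Q₀ (A := CliffordAlgebra Q₁) ⟨g, fun v => by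
    rw [← jj]
    simp only [hgv, mul_assoc, fe, ej, fj, ee, ff, ee', ff', fe', ej', fj', mul_neg, neg_mul,
      neg_neg, mul_one]⟩
  have hφ : ∀ v, φ (CliffordAlgebra.ι Q₀ v) = j v * (f * e) := fun v => by simp [φ, hgv]
  have comm : ∀ n : CliffordAlgebra Q₁,
      (∀ v, n * (j v * (f * e)) = (j v * (f * e)) * n) → ∀ a, n * φ a = φ a * n := by
    intro n hn a
    induction a using CliffordAlgebra.induction with
    | algebraMap r => rw [AlgHom.commutes, Algebra.commutes]
    | ι v => rw [hφ]; exact hn v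
    | mul a b ha hb => rw [map_mul, ← mul_assoc, ha, mul_assoc, hb, mul_assoc]
    | add a b ha hb => rw [map_add, mul_add, ha, hb, add_mul]
  have ce : ∀ a, e * φ a = φ a * e := comm e fun v => by
    simp only [mul_assoc, fe, ej, fj, ee, ff, ee', ff', fe', ej', fj', mul_neg, neg_mul,
      neg_neg, mul_one]
  have cf : ∀ a, f * φ a = φ a * f := comm f fun v => by
    simp only [mul_assoc, fe, ej, fj, ee, ff, ee', ff', fe', ej', fj', mul_neg, neg_mul,
      neg_neg, mul_one]
  let N := (1/2 : ℝ) • (e + f)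
  let M := (1/2 : ℝ) • (e - f)
  have hN : N * N = 0 := by
    simp [N, mul_add, add_mul, ee, ff, fe]
  have hM : M * M = 0 := by
    simp [M, mul_sub, sub_mul, ee, ff, fe]
    abel
  have hNM : N * M = (1/2 : ℝ) • (1 - e * f) := by
    simp only [N, M, mul_sub, add_mul, ee, ff, fe, smul_mul_assoc, mul_smul_comm]
    module
  have hMN : M * N = (1/2 : ℝ) • (1 + e * f) := by
    simp only [N, M, mul_add, sub_mul, ee, ff, fe, smul_mul_assoc, mul_smul_comm]
    module
  let Ψ := matHom φ N M hN hM (by rw [hNM, hMN]; module)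
    (fun a => by simp [N, add_mul, mul_add, ce, cf])
    (fun a => by simp [M, sub_mul, mul_sub, ce, cf])
  have hΨ : ∀ X, Ψ X = φ (X 0 0) * (N * M) + φ (X 0 1) * N + φ (X 1 0) * M
    + φ (X 1 1) * (M * N) := fun X => rfl
  have hΦφ : ∀ a, Φ (φ a) = !![a, 0; 0, a] := by
    intro a
    induction a using CliffordAlgebra.induction with
    | algebraMap r =>
      rw [AlgHom.commutes, AlgHom.commutes]
      ext i j
      fin_cases i <;> fin_cases j <;> simp [Matrix.algebraMap_matrix_apply]
    | ι v => rw [hφ]; simp [hΦj, hΦe, hΦf]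
    | mul a b ha hb => rw [map_mul, map_mul, ha, hb]; simp
    | add a b ha hb => rw [map_add, map_add, ha, hb]; simp
  have hΦN : Φ N = !![0, 1; 0, 0] := by
    simp only [N, map_smul, map_add, hΦe, hΦf]
    ext i j
    fin_cases i <;> fin_cases j <;> simp [← two_smul ℝ (1 : CliffordAlgebra Q₀)]
  have hΦM : Φ M = !![0, 0; 1, 0] := by
    simp only [M, map_smul, map_sub, hΦe, hΦf]
    ext i j
    fin_cases i <;> fin_cases j <;> simp [← two_smul ℝ (1 : CliffordAlgebra Q₀)]
  refine ⟨AlgEquiv.ofAlgHom Φ Ψ ?_ ?_⟩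
  · ext X : 1
    change Φ (Ψ X) = X
    rw [hΨ]
    simp only [map_add, map_mul, hΦφ, hΦN, hΦM]
    ext i j
    fin_cases i <;> fin_cases j <;> simp
  · apply CliffordAlgebra.hom_ext
    refine LinearMap.ext fun x => ?_
    change Ψ (Φ (CliffordAlgebra.ι Q₁ x)) = CliffordAlgebra.ι Q₁ x
    obtain ⟨v, a, b⟩ := x
    have hx : CliffordAlgebra.ι Q₁ (v, a, b) = j v + a • e + b • f := by
      simp only [hj, e, f, ← map_smul, ← map_add]
      simp
    rw [hΦ, hΨ, hx]
    simp only [genMap, LinearMap.coe_mk, AddHom.coe_mk, Matrix.of_apply, Matrix.cons_val_zero,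
      Matrix.cons_val_one, Matrix.cons_val', Matrix.cons_val_fin_one, map_neg, hφ,
      AlgHom.commutes, hNM, hMN]
    simp only [N, M, ← Algebra.smul_def, mul_smul_comm, mul_add, mul_sub, neg_mul, mul_one,
      mul_assoc, fe, ee, ff, ee', ff', fe', mul_neg, neg_neg]
    module

end Abstract

/-- Splitting off the first and last coordinates. -/
def splitEquiv (p q : ℕ) :
    (Fin (p + 1 + (q + 1)) → ℝ) ≃ₗ[ℝ] (Fin (p + q) → ℝ) × ℝ × ℝ where
  toFun x := (fun i => x ⟨i + 1, by omega⟩, x ⟨0, by omega⟩, x ⟨p + q + 1, by omega⟩)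
  map_add' x y := rfl
  map_smul' r x := rfl
  invFun y i := if h : (i : ℕ) = 0 then y.2.1 else if h' : (i : ℕ) = p + q + 1 then y.2.2 else
    y.1 ⟨i - 1, by omega⟩
  left_inv x := by
    funext i
    dsimp only
    split_ifs with h h'
    · congr 1; ext; simp [h]
    · congr 1; ext; simp [h']
    · congr 1; ext; simp; omega
  right_inv y := by
    obtain ⟨v, a, b⟩ := y
    simp
    funext i
    rw [if_neg (by omega)]

theorem Q_split (p q : ℕ) (x : Fin (p + 1 + (q + 1)) → ℝ) :
    Q (p + 1) (q + 1) x = Q p q (splitEquiv p q x).1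
      + (splitEquiv p q x).2.1 * (splitEquiv p q x).2.1
      - (splitEquiv p q x).2.2 * (splitEquiv p q x).2.2 := by
  have hc : p + q + 1 + 1 = p + 1 + (q + 1) := by omega
  simp only [Q, QuadraticMap.weightedSumSquares_apply]
  rw [← (finCongr hc).sum_comp, Fin.sum_univ_succ, Fin.sum_univ_castSucc]
  simp [splitEquiv]
  have : ¬ (p + q + 1 ≤ p) := by omega
  simp [Fin.cast, Fin.last]
  ring_nf
  rw [if_neg (by omega)]
  ring

theorem G_succ_succ_iso_matrix (p q : ℕ) :
    Nonempty (G (p + 1) (q + 1) ≃ₐ[ℝ] Matrix (Fin 2) (Fin 2) (G p q)) := by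
  let E := splitEquiv p q
  let Q₁ : QuadraticForm ℝ ((Fin (p + q) → ℝ) × ℝ × ℝ) :=
    (Q (p + 1) (q + 1)).comp E.symm.toLinearMap
  obtain ⟨F⟩ := abstract_iso (Q p q) Q₁ (by
    intro v a b
    have := Q_split p q (E.symm (v, a, b))
    rw [show splitEquiv p q (E.symm (v, a, b)) = (v, a, b) from E.apply_symm_apply _] at this
    exact this)
  let I : (Q (p + 1) (q + 1)).IsometryEquiv Q₁ :=
    { E with map_app' := fun x => congrArg (Q (p + 1) (q + 1)) (E.symm_apply_apply x) }
  exact ⟨(CliffordAlgebra.equivOfIsometry I).trans F⟩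
end
end

section
/- Let p, q be natural numbers with p − q ≡ 1 (mod 4) (as integers). Then for every natural number k, the geometric algebras G_{p+k,q} and G_{p,q+k} are isomorphic as ℝ-algebras. -/
noncomputable section

section general
open CliffordAlgebra QuadraticMap

variable {V W : Type} [AddCommGroup V] [Module ℝ V] [AddCommGroup W] [Module ℝ W]

/-- The twisted map. -/
def twistHom (Q₁ : QuadraticForm ℝ V) (Q₂ Q₃ : QuadraticForm ℝ W) (hQ : ∀ w, Q₃ w = -Q₂ w)
    (ω : CliffordAlgebra Q₁) (hsq : ω * ω = 1) (hodd : ω ∈ evenOdd Q₁ 1)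
    (hc : ∀ v, ι Q₁ v * ω = ω * ι Q₁ v) :
    CliffordAlgebra (Q₁.prod Q₃) →ₐ[ℝ] CliffordAlgebra (Q₁.prod Q₂) :=
  CliffordAlgebra.lift _ ⟨LinearMap.coprod
    (ι (Q₁.prod Q₂) ∘ₗ LinearMap.inl ℝ V W)
    (LinearMap.mulLeft ℝ (map (QuadraticMap.Isometry.inl Q₁ Q₂) ω) ∘ₗ ι (Q₁.prod Q₂) ∘ₗ LinearMap.inr ℝ V W), by
      rintro ⟨v, w⟩
      have h1 := congrArg (map (QuadraticMap.Isometry.inl Q₁ Q₂)) hsq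
      have h2 := congrArg (map (QuadraticMap.Isometry.inl Q₁ Q₂)) (hc v)
      have h3 := map_mul_map_eq_neg_of_isOrtho_of_mem_evenOdd_one
        (QuadraticMap.Isometry.inl Q₁ Q₂) (QuadraticMap.Isometry.inr Q₁ Q₂) (fun x y => IsOrtho.inl_inr x y) ω (ι Q₂ w) hodd
        (ι_mem_evenOdd_one _ w)
      have h4 : ι (Q₁.prod Q₂) (v, 0) * ι (Q₁.prod Q₂) (0, w)
        = -(ι (Q₁.prod Q₂) (0, w) * ι (Q₁.prod Q₂) (v, 0)) :=
        ι_mul_ι_comm_of_isOrtho (IsOrtho.inl_inr v w)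
      have h5 := ι_sq_scalar (Q₁.prod Q₂) (v, 0)
      have h6 := ι_sq_scalar (Q₁.prod Q₂) (0, w)
      simp only [map_mul, map_one, map_apply_ι, QuadraticMap.Isometry.inl_apply, QuadraticMap.Isometry.inr_apply] at h1 h2 h3
      simp only [prod_apply, map_zero, add_zero, zero_add] at h5 h6
      simp only [LinearMap.coprod_apply, LinearMap.comp_apply, LinearMap.inl_apply,
        LinearMap.inr_apply, LinearMap.mulLeft_apply, prod_apply, hQ, map_add, map_neg]
      rw [← h5, ← h6]
      generalize map (QuadraticMap.Isometry.inl Q₁ Q₂) ω = o at *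
      generalize ι (Q₁.prod Q₂) (v, 0) = a at *
      generalize ι (Q₁.prod Q₂) (0, w) = b at *
      have e1 : a * (o * b) = - (o * b * a) := by
        rw [← mul_assoc, h2, mul_assoc, h4, mul_neg, mul_assoc]
      have e2 : o * b * (o * b) = - (b * b) := by
        nth_rewrite 1 [h3]
        rw [mul_assoc, ← mul_assoc o o b, h1, one_mul, neg_mul]
      rw [add_mul, mul_add, mul_add, e1, e2]
      abel⟩

lemma twistHom_inl (Q₁ : QuadraticForm ℝ V) (Q₂ Q₃ : QuadraticForm ℝ W) (hQ : ∀ w, Q₃ w = -Q₂ w)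
    (ω : CliffordAlgebra Q₁) (hsq : ω * ω = 1) (hodd : ω ∈ evenOdd Q₁ 1)
    (hc : ∀ v, ι Q₁ v * ω = ω * ι Q₁ v) (v : V) :
    twistHom Q₁ Q₂ Q₃ hQ ω hsq hodd hc (ι _ (v, 0)) = ι _ (v, 0) := by
  simp [twistHom, ← Prod.zero_eq_mk]

lemma twistHom_inr (Q₁ : QuadraticForm ℝ V) (Q₂ Q₃ : QuadraticForm ℝ W) (hQ : ∀ w, Q₃ w = -Q₂ w)
    (ω : CliffordAlgebra Q₁) (hsq : ω * ω = 1) (hodd : ω ∈ evenOdd Q₁ 1)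
    (hc : ∀ v, ι Q₁ v * ω = ω * ι Q₁ v) (w : W) :
    twistHom Q₁ Q₂ Q₃ hQ ω hsq hodd hc (ι _ (0, w)) = map (QuadraticMap.Isometry.inl Q₁ Q₂) ω * ι _ (0, w) := by
  simp [twistHom, ← Prod.zero_eq_mk]

lemma twistHom_map (Q₁ : QuadraticForm ℝ V) (Q₂ Q₃ : QuadraticForm ℝ W) (hQ : ∀ w, Q₃ w = -Q₂ w)
    (ω : CliffordAlgebra Q₁) (hsq : ω * ω = 1) (hodd : ω ∈ evenOdd Q₁ 1)
    (hc : ∀ v, ι Q₁ v * ω = ω * ι Q₁ v) (x : CliffordAlgebra Q₁) :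
    twistHom Q₁ Q₂ Q₃ hQ ω hsq hodd hc (map (QuadraticMap.Isometry.inl Q₁ Q₃) x)
      = map (QuadraticMap.Isometry.inl Q₁ Q₂) x := by
  have : (twistHom Q₁ Q₂ Q₃ hQ ω hsq hodd hc).comp (map (QuadraticMap.Isometry.inl Q₁ Q₃))
      = map (QuadraticMap.Isometry.inl Q₁ Q₂) := by
    apply CliffordAlgebra.hom_ext
    ext v
    simp [twistHom_inl]
  exact congrArg (fun f => f x) this

lemma twistHom_comp (Q₁ : QuadraticForm ℝ V) (Q₂ Q₃ : QuadraticForm ℝ W)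
    (hQ : ∀ w, Q₃ w = -Q₂ w) (hQ' : ∀ w, Q₂ w = -Q₃ w)
    (ω : CliffordAlgebra Q₁) (hsq : ω * ω = 1) (hodd : ω ∈ evenOdd Q₁ 1)
    (hc : ∀ v, ι Q₁ v * ω = ω * ι Q₁ v) :
    (twistHom Q₁ Q₂ Q₃ hQ ω hsq hodd hc).comp (twistHom Q₁ Q₃ Q₂ hQ' ω hsq hodd hc)
      = AlgHom.id ℝ _ := by
  apply CliffordAlgebra.hom_ext
  apply LinearMap.prod_ext
  · ext v
    simp [twistHom_inl]
  · ext w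
    simp only [LinearMap.comp_apply, AlgHom.toLinearMap_apply, LinearMap.inr_apply,
      AlgHom.comp_apply, twistHom_inr, map_mul, twistHom_map, AlgHom.id_apply]
    rw [← mul_assoc, ← map_mul, hsq, map_one, one_mul]

lemma twist_equiv (Q₁ : QuadraticForm ℝ V) (Q₂ Q₃ : QuadraticForm ℝ W) (hQ : ∀ w, Q₃ w = -Q₂ w)
    (ω : CliffordAlgebra Q₁) (hsq : ω * ω = 1) (hodd : ω ∈ evenOdd Q₁ 1)
    (hc : ∀ v, ι Q₁ v * ω = ω * ι Q₁ v) :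
    Nonempty (CliffordAlgebra (Q₁.prod Q₂) ≃ₐ[ℝ] CliffordAlgebra (Q₁.prod Q₃)) :=
  have hQ' : ∀ w, Q₂ w = -Q₃ w := fun w => by rw [hQ, neg_neg]
  ⟨AlgEquiv.ofAlgHom (twistHom Q₁ Q₃ Q₂ hQ' ω hsq hodd hc) (twistHom Q₁ Q₂ Q₃ hQ ω hsq hodd hc)
    (twistHom_comp _ _ _ _ _ _ _ _ _) (twistHom_comp _ _ _ _ _ _ _ _ _)⟩

/-- Splitting a weighted sum of squares along an equivalence of indices. -/
def splitIso {α β γ : Type} [Fintype α] [Fintype β] [Fintype γ] (e : α ⊕ β ≃ γ)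
    (u : α → ℝ) (v : β → ℝ) (w : γ → ℝ) (hu : ∀ a, w (e (.inl a)) = u a)
    (hv : ∀ b, w (e (.inr b)) = v b) :
    (weightedSumSquares ℝ w).IsometryEquiv
      ((weightedSumSquares ℝ u).prod (weightedSumSquares ℝ v)) where
  toLinearEquiv := (LinearEquiv.funCongrLeft ℝ ℝ e).trans (LinearEquiv.sumArrowLequivProdArrow α β ℝ ℝ)
  map_app' x := by
    simp only [prod_apply, weightedSumSquares_apply]
    rw [← e.sum_comp, Fintype.sum_sum_type]
    simp only [hu, hv]
    rfl

end general

section pseudo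

/-- Ordered product of the first `n` elements. -/
def pp {A : Type} [Ring A] (e : ℕ → A) : ℕ → A
  | 0 => 1
  | n + 1 => pp e n * e n

lemma pp_ge {A : Type} [Ring A] (e : ℕ → A) (he : ∀ i j, i ≠ j → e i * e j = -(e j * e i))
    (m j : ℕ) (h : m ≤ j) : e j * pp e m = (-1) ^ m * (pp e m * e j) := by
  induction m with
  | zero => simp [pp]
  | succ m ih =>
    rw [pp, ← mul_assoc, ih (by omega), mul_assoc, mul_assoc, he j m (by omega), pow_succ]
    simp [mul_assoc]

lemma pp_lt {A : Type} [Ring A] (e : ℕ → A) (he : ∀ i j, i ≠ j → e i * e j = -(e j * e i))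
    (m j : ℕ) (h : j < m) : e j * pp e m = (-1) ^ (m + 1) * (pp e m * e j) := by
  induction m with
  | zero => omega
  | succ m ih =>
    rcases Nat.lt_succ_iff_lt_or_eq.1 h with h | rfl
    · rw [pp, ← mul_assoc, ih h, mul_assoc, mul_assoc, he j m (by omega), pow_succ _ (m + 1)]
      simp [mul_assoc]
    · rw [pp, ← mul_assoc, pp_ge e he j j le_rfl, pow_succ, pow_succ]
      simp [mul_assoc]

lemma pp_sq {A : Type} [Ring A] (e : ℕ → A) (he : ∀ i j, i ≠ j → e i * e j = -(e j * e i))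
    (p n : ℕ) (h1 : ∀ i < n, i < p → e i * e i = 1) (h2 : ∀ i < n, p ≤ i → e i * e i = -1) :
    pp e n * pp e n = (-1) ^ (∑ i ∈ Finset.range n, i + (n - p)) := by
  induction n with
  | zero => simp [pp]
  | succ n ih =>
    have ih := ih (fun i hi => h1 i (by omega)) (fun i hi => h2 i (by omega))
    have hc : ∀ (k : ℕ) (x : A), x * (-1) ^ k = (-1) ^ k * x := fun k x =>
      ((Commute.neg_one_right x).pow_right k).eq
    have : pp e (n + 1) * pp e (n + 1) = (-1) ^ n * (pp e n * pp e n) * (e n * e n) := by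
      rw [pp, mul_assoc, ← mul_assoc (e n), pp_ge e he n n le_rfl, ← mul_assoc, ← mul_assoc,
        hc]
      simp only [mul_assoc]
    rw [this, ih, Finset.sum_range_succ, ← pow_add]
    rcases lt_or_ge n p with h | h
    · rw [h1 n (by omega) h, mul_one]
      congr 1
      omega
    · rw [h2 n (by omega) h, ← pow_succ]
      congr 1
      omega

lemma even_exp (p q : ℕ) (h : ((p : ℤ) - q) ≡ 1 [ZMOD 4]) :
    Even (∑ i ∈ Finset.range (p + q), i + (p + q - p)) ∧ Odd (p + q) := by
  have hs := Finset.sum_range_id_mul_two (p + q)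
  have h' : (p + q) % 4 = (1 + 2 * q) % 4 := by
    unfold Int.ModEq at h
    omega
  generalize ∑ i ∈ Finset.range (p + q), i = s at *
  rw [Nat.add_sub_cancel_left]
  generalize p + q = n at *
  refine ⟨?_, Nat.odd_iff.2 (by omega)⟩
  rcases Nat.even_or_odd' q with ⟨t, rfl | rfl⟩
  · obtain ⟨a, rfl⟩ : ∃ a, n = 4 * a + 1 := ⟨n / 4, by omega⟩
    have : s = 2 * ((4 * a + 1) * a) := by
      rw [Nat.add_sub_cancel] at hs
      linarith
    rw [this]
    exact ⟨(4 * a + 1) * a + t, by ring⟩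
  · obtain ⟨a, rfl⟩ : ∃ a, n = 4 * a + 3 := ⟨n / 4, by omega⟩
    have : s = (4 * a + 3) * (2 * a + 1) := by
      have : 4 * a + 3 - 1 = 4 * a + 2 := by omega
      rw [this] at hs
      linarith
    rw [this]
    exact ⟨4 * a ^ 2 + 5 * a + 2 + t, by ring⟩

open CliffordAlgebra QuadraticMap

lemma exists_omega (p q : ℕ) (h : ((p : ℤ) - q) ≡ 1 [ZMOD 4]) :
    ∃ ω : CliffordAlgebra (Q p q), ω * ω = 1 ∧ ω ∈ evenOdd (Q p q) 1 ∧
      ∀ v, ι (Q p q) v * ω = ω * ι (Q p q) v := by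
  let b : ℕ → (Fin (p + q) → ℝ) := fun i => if h : i < p + q then Pi.single ⟨i, h⟩ 1 else 0
  let e : ℕ → CliffordAlgebra (Q p q) := fun i => ι (Q p q) (b i)
  have hb : ∀ i (h : i < p + q), b i = Pi.single ⟨i, h⟩ 1 := fun i h => dif_pos h
  have hQ : ∀ i (h : i < p + q), Q p q (b i) = if i < p then 1 else -1 := by
    intro i h
    rw [hb i h, Q, weightedSumSquares_apply, Finset.sum_eq_single ⟨i, h⟩]
    · simp
    · intro j _ hj
      simp [hj]
    · simp
  have he : ∀ i j, i ≠ j → e i * e j = -(e j * e i) := by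
    intro i j hij
    apply ι_mul_ι_comm_of_isOrtho
    rw [isOrtho_def, Q]
    simp only [weightedSumSquares_apply, ← Finset.sum_add_distrib]
    refine Finset.sum_congr rfl fun x _ => ?_
    have : b i x * b j x = 0 := by
      simp only [b]
      split_ifs with h1 h2
      · simp only [Pi.single_apply, Fin.ext_iff]
        split_ifs <;> first | omega | simp
      all_goals simp
    simp only [Pi.add_apply, smul_eq_mul]
    linear_combination (2 * (if (x : ℕ) < p then (1 : ℝ) else -1)) * this
  obtain ⟨hev, hod⟩ := even_exp p q h
  refine ⟨pp e (p + q), ?_, ?_, ?_⟩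
  · rw [pp_sq e he p (p + q), hev.neg_one_pow]
    · intro i hi hip
      simp only [e, ι_sq_scalar, hQ i hi, if_pos hip, map_one]
    · intro i hi hip
      simp only [e, ι_sq_scalar, hQ i hi, if_neg (not_lt.2 hip), map_neg, map_one]
  · have : ∀ m : ℕ, pp e m ∈ evenOdd (Q p q) (m : ZMod 2) := by
      intro m
      induction m with
      | zero => simpa [pp] using SetLike.one_mem_graded (evenOdd (Q p q))
      | succ m ih =>
        rw [Nat.cast_succ]
        exact SetLike.mul_mem_graded ih (ι_mem_evenOdd_one _ _)
    have h1 := this (p + q)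
    rwa [(ZMod.natCast_eq_one_iff_odd).2 hod] at h1
  · intro v
    have hv : v = ∑ i, v i • b i := by
      ext x
      simp only [hb _ (Fin.is_lt _), Finset.sum_apply, Pi.smul_apply, Pi.single_apply]
      simp
    rw [hv]
    simp only [map_sum, map_smul, Finset.sum_mul, Finset.mul_sum, smul_mul_assoc, mul_smul_comm]
    refine Finset.sum_congr rfl fun i _ => ?_
    have := pp_lt e he (p + q) i i.2
    rw [(hod.add_one).neg_one_pow, one_mul] at this
    rw [show ι (Q p q) (b i) = e i from rfl, this]

/-- Index rearrangement. -/
def idx1 (p q k : ℕ) : Fin (p + q) ⊕ Fin k ≃ Fin (p + k + q) :=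
  (Equiv.sumCongr finSumFinEquiv.symm (Equiv.refl _)).trans <|
  ((Equiv.sumAssoc (Fin p) (Fin q) (Fin k)).trans <|
    (Equiv.sumCongr (Equiv.refl _) (Equiv.sumComm _ _)).trans <|
    (Equiv.sumAssoc (Fin p) (Fin k) (Fin q)).symm).trans <|
  (Equiv.sumCongr finSumFinEquiv (Equiv.refl _)).trans finSumFinEquiv

/-- Index rearrangement. -/
def idx2 (p q k : ℕ) : Fin (p + q) ⊕ Fin k ≃ Fin (p + (q + k)) :=
  finSumFinEquiv.trans (finCongr (Nat.add_assoc p q k))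

end pseudo

theorem G_pkq_iso_G_pqk (p q : ℕ) (h : ((p : ℤ) - q) ≡ 1 [ZMOD 4]) (k : ℕ) :
    Nonempty (G (p + k) q ≃ₐ[ℝ] G p (q + k)) := by
  obtain ⟨ω, hsq, hodd, hc⟩ := exists_omega p q h
  obtain ⟨f⟩ := twist_equiv (Q p q) (QuadraticMap.weightedSumSquares ℝ (fun _ : Fin k => (1 : ℝ)))
    (QuadraticMap.weightedSumSquares ℝ (fun _ : Fin k => (-1 : ℝ)))
    (fun w => by simp [QuadraticMap.weightedSumSquares_apply]) ω hsq hodd hc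
  have e1 := splitIso (idx1 p q k) (fun i => if (i : ℕ) < p then (1 : ℝ) else -1) (fun _ => 1)
    (fun i => if (i : ℕ) < p + k then (1 : ℝ) else -1)
    (by
      intro a
      obtain ⟨a, rfl⟩ := finSumFinEquiv.surjective a
      rcases a with a | a
      · have := a.2
        simp [idx1]
        omega
      · simp [idx1])
    (by
      intro b
      simp [idx1])
  have e2 := splitIso (idx2 p q k) (fun i => if (i : ℕ) < p then (1 : ℝ) else -1) (fun _ => -1)
    (fun i => if (i : ℕ) < p then (1 : ℝ) else -1)
    (by intro a; simp [idx2])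
    (by
      intro b
      simp [idx2]
      intro; linarith)
  exact ⟨((CliffordAlgebra.equivOfIsometry e1).trans f).trans
    (CliffordAlgebra.equivOfIsometry e2).symm⟩
end
end

section
/- (Cartan–Bott periodicity) For all natural numbers p and q, the geometric algebra G_{p+8,q} is isomorphic as an ℝ-algebra to the algebra of 16×16 matrices with entries in G_{p,q}: G_{p+8,q} ≃ₐ[ℝ] Matrix (Fin 16) (Fin 16) G_{p,q}. -/
set_option linter.unusedSimpArgs false
set_option linter.unusedSectionVars false
noncomputable section

namespace Bott

abbrev C {κ : Type} [Fintype κ] (w : κ → ℝ) : Type :=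
  CliffordAlgebra (QuadraticMap.weightedSumSquares ℝ w)

section gens
variable {κ : Type} [Fintype κ] [DecidableEq κ] (w : κ → ℝ)

def gen (i : κ) : C w := CliffordAlgebra.ι _ (Pi.single i 1)

/-- a family satisfying the Clifford relations -/
structure Rel {B : Type} [Ring B] [Algebra ℝ B] (a : κ → B) : Prop where
  sq : ∀ i, a i * a i = w i • (1 : B)
  anti : ∀ i j, i ≠ j → a i * a j = -(a j * a i)

theorem gen_rel : Rel w (gen w) where
  sq i := by
    rw [gen, CliffordAlgebra.ι_sq_scalar, Algebra.algebraMap_eq_smul_one]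
    congr 1
    rw [QuadraticMap.weightedSumSquares_apply, Finset.sum_eq_single i]
    · simp
    · intro j _ hj
      simp [hj]
    · simp
  anti i j hij := by
    apply eq_neg_of_add_eq_zero_left
    rw [gen, gen, CliffordAlgebra.ι_mul_ι_add_swap]
    have : QuadraticMap.polar (QuadraticMap.weightedSumSquares ℝ w)
        (Pi.single i (1 : ℝ)) (Pi.single j 1) = 0 := by
      simp only [QuadraticMap.polar, QuadraticMap.weightedSumSquares_apply]
      rw [← Finset.sum_sub_distrib, ← Finset.sum_sub_distrib]
      apply Finset.sum_eq_zero
      intro k _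
      by_cases h1 : k = i
      · subst h1
        simp [Pi.single_eq_of_ne hij]
      · simp [Pi.single_eq_of_ne h1]
    rw [this, map_zero]

variable {w}
variable {B : Type} [Ring B] [Algebra ℝ B]

def liftHom (a : κ → B) (h : Rel w a) : C w →ₐ[ℝ] B :=
  CliffordAlgebra.lift _ ⟨Fintype.linearCombination ℝ a, by
    intro x
    rw [Fintype.linearCombination_apply, QuadraticMap.weightedSumSquares_apply,
      Algebra.algebraMap_eq_smul_one]
    have h2 : ∀ y z : B, y + y = z + z → y = z := by
      intro y z hyz
      rw [← two_smul ℝ, ← two_smul ℝ z] at hyz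
      exact smul_right_injective B (two_ne_zero (α := ℝ)) hyz
    apply h2
    have e1 : (∑ i, x i • a i) * (∑ i, x i • a i) =
        ∑ i, ∑ j, (x i * x j) • (a i * a j) := by
      rw [Finset.sum_mul_sum]
      simp only [smul_mul_smul_comm]
    have e2 : (∑ i, x i • a i) * (∑ i, x i • a i) =
        ∑ i, ∑ j, (x i * x j) • (a j * a i) := by
      rw [e1, Finset.sum_comm]
      simp only [mul_comm]
    nth_rewrite 1 [e1]
    rw [e2, ← Finset.sum_add_distrib, Finset.sum_smul, ← Finset.sum_add_distrib]
    apply Finset.sum_congr rfl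
    intro i _
    rw [← Finset.sum_add_distrib, Finset.sum_eq_single i]
    · rw [h.sq, smul_smul, smul_eq_mul, mul_comm (w i)]
    · intro j _ hj
      rw [h.anti i j hj.symm]; simp
    · simp⟩

@[simp] theorem liftHom_gen (a : κ → B) (h : Rel w a) (i : κ) :
    liftHom a h (gen w i) = a i := by
  simp [liftHom, gen]

theorem hom_ext {f g : C w →ₐ[ℝ] B} (h : ∀ i, f (gen w i) = g (gen w i)) : f = g := by
  apply CliffordAlgebra.hom_ext
  apply LinearMap.pi_ext'
  intro i
  ext
  exact h i

end gens

section reindex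
variable {κ μ : Type} [Fintype κ] [DecidableEq κ] [Fintype μ] [DecidableEq μ]

def reindex (w : κ → ℝ) (v : μ → ℝ) (e : κ ≃ μ) (h : ∀ i, w i = v (e i)) : C w ≃ₐ[ℝ] C v :=
  AlgEquiv.ofAlgHom
    (liftHom (fun i => gen v (e i)) ⟨fun i => by rw [h]; exact (gen_rel v).sq _,
      fun i j hij => (gen_rel v).anti _ _ (by simpa using hij)⟩)
    (liftHom (fun i => gen w (e.symm i)) ⟨fun i => by
        rw [(gen_rel w).sq, h, e.apply_symm_apply],
      fun i j hij => (gen_rel w).anti _ _ (by simpa using hij)⟩)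
    (hom_ext fun i => by simp) (hom_ext fun i => by simp)

end reindex

section four
variable {B : Type} [Ring B] [Algebra ℝ B]

def om (a : Fin 4 → B) : B := a 0 * a 1 * a 2 * a 3

theorem om_comm (a : Fin 4 → B) (v : B) (h : ∀ i, v * a i = -(a i * v)) :
    v * om a = om a * v := by
  have h' : ∀ i x, v * (a i * x) = -(a i * (v * x)) := fun i x => by
    rw [← mul_assoc, h, neg_mul, mul_assoc]
  simp only [om, mul_assoc, h, h', mul_neg, neg_neg]

theorem om_anti {s : ℝ} (a : Fin 4 → B) (h : Rel (fun _ => s) a) (i : Fin 4) :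
    om a * a i = - (a i * om a) := by
  have sq := h.sq
  have sq' : ∀ i x, a i * (a i * x) = s • x := fun i x => by
    rw [← mul_assoc, sq, smul_mul_assoc, one_mul]
  have r : ∀ i j, j < i → a i * a j = - (a j * a i) := fun i j hij => h.anti _ _ hij.ne'
  have r' : ∀ i j, j < i → ∀ x, a i * (a j * x) = - (a j * (a i * x)) := fun i j hij x => by
    rw [← mul_assoc, r i j hij, neg_mul, mul_assoc]
  have r10 := r 1 0 (by decide)
  have r20 := r 2 0 (by decide)
  have r30 := r 3 0 (by decide)
  have r21 := r 2 1 (by decide)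
  have r31 := r 3 1 (by decide)
  have r32 := r 3 2 (by decide)
  have r10' := r' 1 0 (by decide)
  have r20' := r' 2 0 (by decide)
  have r30' := r' 3 0 (by decide)
  have r21' := r' 2 1 (by decide)
  have r31' := r' 3 1 (by decide)
  have r32' := r' 3 2 (by decide)
  clear r r'
  fin_cases i <;>
  simp [om, mul_assoc, sq, sq', r10, r20, r30, r21, r31, r32, r10', r20', r30', r21', r31', r32']

theorem om_sq {s : ℝ} (hs : s * s = 1) (a : Fin 4 → B) (h : Rel (fun _ => s) a) :
    om a * om a = 1 := by
  have sq := h.sq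
  have sq' : ∀ i x, a i * (a i * x) = s • x := fun i x => by
    rw [← mul_assoc, sq, smul_mul_assoc, one_mul]
  have o := om_anti a h
  have o' : ∀ i x, om a * (a i * x) = -(a i * (om a * x)) := fun i x => by
    rw [← mul_assoc, o, neg_mul, mul_assoc]
  have r : ∀ i j, j < i → a i * a j = - (a j * a i) := fun i j hij => h.anti _ _ hij.ne'
  have r' : ∀ i j, j < i → ∀ x, a i * (a j * x) = - (a j * (a i * x)) := fun i j hij x => by
    rw [← mul_assoc, r i j hij, neg_mul, mul_assoc]
  have r10' := r' 1 0 (by decide)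
  have r20' := r' 2 0 (by decide)
  have r30' := r' 3 0 (by decide)
  have r21' := r' 2 1 (by decide)
  have r31' := r' 3 1 (by decide)
  have r32' := r' 3 2 (by decide)
  have r30 := r 3 0 (by decide)
  have r31 := r 3 1 (by decide)
  have r32 := r 3 2 (by decide)
  clear r r'
  simp [om, mul_assoc, sq, sq', r30, r31, r32, r10', r20', r30', r21', r31', r32', smul_smul, hs]

theorem om_tw {s : ℝ} (hs : s * s = 1) (a : Fin 4 → B) (h : Rel (fun _ => s) a) :
    om (fun i => a i * om a) = om a := by
  have o := om_anti a h
  have o' : ∀ i x, om a * (a i * x) = -(a i * (om a * x)) := fun i x => by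
    rw [← mul_assoc, o, neg_mul, mul_assoc]
  have q := om_sq hs a h
  have q' : ∀ x, om a * (om a * x) = x := fun x => by rw [← mul_assoc, q, one_mul]
  generalize hw : om a = z at *
  simp only [om, mul_assoc, o, o', q, q', mul_neg, neg_mul, neg_neg, mul_one]
  rw [← hw, om]; simp only [mul_assoc]

variable {κ : Type} [Fintype κ] [DecidableEq κ] (w : κ → ℝ)

def tw (a : κ ⊕ Fin 4 → B) : κ ⊕ Fin 4 → B :=
  Sum.elim (fun i => a (.inl i)) (fun j => a (.inr j) * om (fun k => a (.inr k)))

theorem rel_inr {w : κ → ℝ} {s : ℝ} {a : κ ⊕ Fin 4 → B} (h : Rel (Sum.elim w (fun _ => s)) a) :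
    Rel (fun _ => s) (fun k => a (.inr k)) :=
  ⟨fun i => h.sq (.inr i), fun i j hij => h.anti _ _ (by simpa using hij)⟩

theorem tw_rel {s : ℝ} (hs : s * s = 1) {a : κ ⊕ Fin 4 → B}
    (h : Rel (Sum.elim w (fun _ => s)) a) : Rel (Sum.elim w (fun _ => -s)) (tw a) := by
  have hr := rel_inr h
  have o := om_anti _ hr
  have q := om_sq hs _ hr
  have key : ∀ i j, a (.inr i) * om (fun k => a (.inr k)) * (a (.inr j) * om (fun k => a (.inr k)))
      = -(a (.inr i) * a (.inr j)) := fun i j => by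
    rw [mul_assoc, ← mul_assoc (om _), o, neg_mul, mul_assoc, q, mul_one, mul_neg]
  have c : ∀ i, a (.inl i) * om (fun k => a (.inr k)) = om (fun k => a (.inr k)) * a (.inl i) :=
    fun i => om_comm _ _ fun k => h.anti _ _ (by simp)
  refine ⟨?_, ?_⟩
  · rintro (i | i)
    · exact h.sq (.inl i)
    · simp only [tw, Sum.elim_inr]
      rw [key, hr.sq, neg_smul]
  · rintro (i | i) (j | j) hij
    · exact h.anti _ _ hij
    · simp only [tw, Sum.elim_inl, Sum.elim_inr]
      rw [← mul_assoc, h.anti (.inl i) (.inr j) hij, neg_mul, mul_assoc, mul_assoc, c]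
    · simp only [tw, Sum.elim_inl, Sum.elim_inr]
      rw [← mul_assoc, h.anti (.inl j) (.inr i) hij.symm, neg_mul, mul_assoc, mul_assoc, c, neg_neg]
    · simp only [tw, Sum.elim_inr]
      rw [key, key, h.anti _ _ hij]

theorem map_om {B' : Type} [Ring B'] [Algebra ℝ B'] (f : B →ₐ[ℝ] B') (a : Fin 4 → B) :
    f (om a) = om (fun i => f (a i)) := by
  simp [om]

theorem tw_tw {w : κ → ℝ} {s : ℝ} (hs : s * s = 1) {a : κ ⊕ Fin 4 → B}
    (h : Rel (Sum.elim w (fun _ => s)) a) : tw (tw a) = a := by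
  have hr := rel_inr h
  funext i
  rcases i with i | i
  · rfl
  · have := om_tw hs _ hr
    simp only [tw, Sum.elim_inr]
    rw [this, mul_assoc, om_sq hs _ hr, mul_one]

theorem map_tw {B' : Type} [Ring B'] [Algebra ℝ B'] (f : B →ₐ[ℝ] B') (a : κ ⊕ Fin 4 → B) (i) :
    f (tw a i) = tw (fun i => f (a i)) i := by
  rcases i with i | i <;> simp [tw, map_om]

def twHom (s t : ℝ) (hs : s * s = 1) (ht : t = -s) :
    C (Sum.elim w (fun _ : Fin 4 => t)) →ₐ[ℝ] C (Sum.elim w (fun _ : Fin 4 => s)) :=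
  liftHom (tw (gen _)) (by rw [ht]; exact tw_rel w hs (gen_rel _))

theorem twHom_comp (s t : ℝ) (hs : s * s = 1) (ht : t = -s) (ht' : t * t = 1) (hs' : s = -t) :
    (twHom w s t hs ht).comp (twHom w t s ht' hs') = AlgHom.id ℝ _ := by
  apply hom_ext
  intro i
  simp only [twHom, AlgHom.comp_apply, liftHom_gen, map_tw, AlgHom.id_apply]
  exact congrFun (tw_tw hs (gen_rel (Sum.elim w fun _ : Fin 4 => s))) i

def fourEquiv : C (Sum.elim w (fun _ : Fin 4 => (1 : ℝ))) ≃ₐ[ℝ]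
    C (Sum.elim w (fun _ : Fin 4 => (-1 : ℝ))) :=
  AlgEquiv.ofAlgHom (twHom w (-1) 1 (by norm_num) (by norm_num))
    (twHom w 1 (-1) (by norm_num) (by norm_num))
    (twHom_comp w _ _ _ _ _ _) (twHom_comp w _ _ _ _ _ _)

end four

section units
variable {A B : Type} [Ring A] [Algebra ℝ A] [Ring B] [Algebra ℝ B]

/-- matrix units commuting with the image of `φ` give a map from matrices -/
def unitsHom (φ : A →ₐ[ℝ] B) (E : Fin 2 → Fin 2 → B)
    (hE : ∀ i j k l, E i j * E k l = if j = k then E i l else 0)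
    (h1 : E 0 0 + E 1 1 = 1) (hc : ∀ i j x, φ x * E i j = E i j * φ x) :
    Matrix (Fin 2) (Fin 2) A →ₐ[ℝ] B :=
  AlgHom.ofLinearMap
    { toFun := fun M => ∑ i, ∑ j, E i j * φ (M i j)
      map_add' := fun M N => by
        simp only [Matrix.add_apply, map_add, mul_add, Finset.sum_add_distrib]
      map_smul' := fun r M => by
        simp only [Matrix.smul_apply, map_smul, mul_smul_comm, Finset.smul_sum, RingHom.id_apply] }
    (by simp [Fin.sum_univ_two, h1])
    (by
      intro M N
      have key : ∀ i j k l x y, E i j * φ x * (E k l * φ y) =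
          (if j = k then E i l else 0) * φ (x * y) := fun i j k l x y => by
        rw [mul_assoc, ← mul_assoc (φ x), hc, ← hE, map_mul]
        simp only [mul_assoc]
      simp only [LinearMap.coe_mk, AddHom.coe_mk, Fin.sum_univ_two, add_mul, mul_add, key,
        Matrix.mul_apply, map_add]
      simp
      abel)

theorem unitsHom_apply (φ : A →ₐ[ℝ] B) (E : Fin 2 → Fin 2 → B) (hE h1 hc)
    (M : Matrix (Fin 2) (Fin 2) A) :
    unitsHom φ E hE h1 hc M = ∑ i, ∑ j, E i j * φ (M i j) := rfl

end units

section two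
variable {κ : Type} [Fintype κ] [DecidableEq κ] (w : κ → ℝ)

abbrev w2 : κ ⊕ (Fin 1 ⊕ Fin 1) → ℝ := Sum.elim w (Sum.elim (fun _ => 1) (fun _ => -1))

def matGen : κ ⊕ (Fin 1 ⊕ Fin 1) → Matrix (Fin 2) (Fin 2) (C w) :=
  Sum.elim (fun i => !![gen w i, 0; 0, -gen w i])
    (Sum.elim (fun _ => !![0, 1; 1, 0]) (fun _ => !![0, -1; 1, 0]))

theorem matGen_rel : Rel (w2 w) (matGen w) := by
  have sq := (gen_rel w).sq
  refine ⟨?_, ?_⟩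
  · rintro (i | i | i) <;> ext k l <;> fin_cases k <;> fin_cases l <;>
      simp [matGen, sq, Matrix.mul_apply, Fin.sum_univ_two]
  · rintro (i | i | i) (j | j | j) hij
    · have := (gen_rel w).anti i j (by simpa using hij)
      ext k l; fin_cases k <;> fin_cases l <;>
      simp [matGen, this, Matrix.mul_apply, Fin.sum_univ_two]
    all_goals first
      | exact absurd (by congr 2; exact Subsingleton.elim _ _) hij
      | (ext k l; fin_cases k <;> fin_cases l <;>
          simp [matGen, Matrix.mul_apply, Fin.sum_univ_two])

def fwd : C (w2 w) →ₐ[ℝ] Matrix (Fin 2) (Fin 2) (C w) := liftHom _ (matGen_rel w)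

def ge : C (w2 w) := gen (w2 w) (.inr (.inl 0))
def gf : C (w2 w) := gen (w2 w) (.inr (.inr 0))
def gv (i : κ) : C (w2 w) := gen (w2 w) (.inl i)

theorem ee : ge w * ge w = 1 := by
  have := (gen_rel (w2 w)).sq (.inr (.inl 0)); simpa [ge] using this
theorem ff : gf w * gf w = -1 := by
  have := (gen_rel (w2 w)).sq (.inr (.inr 0)); simpa [gf] using this
theorem fe : gf w * ge w = -(ge w * gf w) := (gen_rel (w2 w)).anti _ _ (by simp)
theorem ve (i) : gv w i * ge w = -(ge w * gv w i) := (gen_rel (w2 w)).anti _ _ (by simp)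
theorem vf (i) : gv w i * gf w = -(gf w * gv w i) := (gen_rel (w2 w)).anti _ _ (by simp)
theorem ee' (x) : ge w * (ge w * x) = x := by rw [← mul_assoc, ee, one_mul]
theorem ff' (x) : gf w * (gf w * x) = -x := by rw [← mul_assoc, ff, neg_mul, one_mul]
theorem fe' (x) : gf w * (ge w * x) = -(ge w * (gf w * x)) := by
  rw [← mul_assoc, fe, neg_mul, mul_assoc]
theorem ve' (i x) : gv w i * (ge w * x) = -(ge w * (gv w i * x)) := by
  rw [← mul_assoc, ve, neg_mul, mul_assoc]
theorem vf' (i x) : gv w i * (gf w * x) = -(gf w * (gv w i * x)) := by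
  rw [← mul_assoc, vf, neg_mul, mul_assoc]

theorem phi_rel : Rel w (fun i => gv w i * (ge w * gf w)) := by
  refine ⟨fun i => ?_, fun i j hij => ?_⟩
  · have : gv w i * gv w i = w i • (1 : C (w2 w)) := (gen_rel (w2 w)).sq (.inl i)
    simp [mul_assoc, ee, ff, fe, ve, vf, ee', ff', fe', ve', vf', this]
  · have : gv w i * gv w j = -(gv w j * gv w i) := (gen_rel (w2 w)).anti _ _ (by simpa using hij)
    simp [mul_assoc, ee, ff, fe, ve, vf, ee', ff', fe', ve', vf', this]

def phi : C w →ₐ[ℝ] C (w2 w) := liftHom _ (phi_rel w)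

theorem phi_comm_of (z : C (w2 w)) (h : ∀ i, phi w (gen w i) * z = z * phi w (gen w i)) (x) :
    phi w x * z = z * phi w x := by
  induction x using CliffordAlgebra.induction with
  | algebraMap r => rw [AlgHom.commutes, Algebra.commutes]
  | ι v =>
    have : CliffordAlgebra.ι (QuadraticMap.weightedSumSquares ℝ w) v = ∑ i, v i • gen w i := by
      conv_lhs => rw [pi_eq_sum_univ' v]
      simp only [map_sum, map_smul, gen]
    rw [this]
    simp only [map_sum, map_smul, Finset.sum_mul, Finset.mul_sum, smul_mul_assoc, mul_smul_comm, h]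
  | mul a b ha hb => rw [map_mul, mul_assoc, hb, ← mul_assoc, ha, mul_assoc]
  | add a b ha hb => rw [map_add, add_mul, mul_add, ha, hb]

theorem phi_e (x) : phi w x * ge w = ge w * phi w x :=
  phi_comm_of w _ (fun i => by
    simp [phi, mul_assoc, ee, ff, fe, ve, vf, ee', ff', fe', ve', vf']) x
theorem phi_f (x) : phi w x * gf w = gf w * phi w x :=
  phi_comm_of w _ (fun i => by
    simp [phi, mul_assoc, ee, ff, fe, ve, vf, ee', ff', fe', ve', vf']) x

/-- matrix units -/
def mu (i j : Fin 2) : C (w2 w) :=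
  (1 / 2 : ℝ) • (!![1 + ge w * gf w, ge w - gf w; ge w + gf w, 1 - ge w * gf w] i j)

theorem mu_mul (i j k l) : mu w i j * mu w k l = if j = k then mu w i l else 0 := by
  fin_cases i <;> fin_cases j <;> fin_cases k <;> fin_cases l <;>
  simp [mu, mul_add, add_mul, mul_sub, sub_mul, mul_assoc, ee, ff, fe, ee', ff', fe'] <;>
  module

theorem mu_one : mu w 0 0 + mu w 1 1 = 1 := by
  simp only [mu]; simp; module

theorem mu_comm (i j x) : phi w x * mu w i j = mu w i j * phi w x := by
  have e' : ∀ y, phi w x * (ge w * y) = ge w * (phi w x * y) := fun y => by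
    rw [← mul_assoc, phi_e, mul_assoc]
  fin_cases i <;> fin_cases j <;>
  simp [mu, mul_add, add_mul, mul_sub, sub_mul, mul_assoc, phi_e, phi_f, e']

def bwd : Matrix (Fin 2) (Fin 2) (C w) →ₐ[ℝ] C (w2 w) :=
  unitsHom (phi w) (mu w) (mu_mul w) (mu_one w) (mu_comm w)

theorem bwd_fwd : (bwd w).comp (fwd w) = AlgHom.id ℝ _ := by
  apply hom_ext
  rintro (i | i | i)
  · simp only [AlgHom.comp_apply, fwd, liftHom_gen, bwd, unitsHom_apply, AlgHom.id_apply]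
    change _ = gv w i
    simp [Fin.sum_univ_two, matGen, mu, phi, mul_add, add_mul, mul_sub, sub_mul, mul_assoc,
      ee, ff, fe, ve, vf, ee', ff', fe', ve', vf']
    module
  · obtain rfl := Subsingleton.elim i 0
    simp only [AlgHom.comp_apply, fwd, liftHom_gen, bwd, unitsHom_apply, AlgHom.id_apply]
    change _ = ge w
    simp [Fin.sum_univ_two, matGen, mu]
    module
  · obtain rfl := Subsingleton.elim i 0
    simp only [AlgHom.comp_apply, fwd, liftHom_gen, bwd, unitsHom_apply, AlgHom.id_apply]
    change _ = gf w
    simp [Fin.sum_univ_two, matGen, mu]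
    module

theorem fwd_e : fwd w (ge w) = !![0, 1; 1, 0] := liftHom_gen _ _ _
theorem fwd_f : fwd w (gf w) = !![0, -1; 1, 0] := liftHom_gen _ _ _
theorem fwd_v (i) : fwd w (gv w i) = !![gen w i, 0; 0, -gen w i] := liftHom_gen _ _ _

theorem fwd_mu (i j) : fwd w (mu w i j) = Matrix.single i j 1 := by
  fin_cases i <;> fin_cases j <;> simp [mu, fwd_e, fwd_f] <;> ext k l <;>
  fin_cases k <;> fin_cases l <;> simp [Matrix.single_apply, Matrix.one_apply] <;> module

theorem fwd_phi (x) : fwd w (phi w x) = Matrix.scalar (Fin 2) x := by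
  have : (fwd w).comp (phi w) = Matrix.scalarAlgHom (Fin 2) ℝ := by
    apply hom_ext
    intro i
    simp [phi, fwd_e, fwd_f, fwd_v]
    ext k l; fin_cases k <;> fin_cases l <;> simp
  exact congrArg (fun f => f x) this

theorem fwd_bwd : (fwd w).comp (bwd w) = AlgHom.id ℝ _ := by
  apply AlgHom.ext
  intro M
  simp only [AlgHom.comp_apply, bwd, unitsHom_apply, AlgHom.id_apply, map_sum, map_mul, fwd_mu,
    fwd_phi]
  conv_rhs => rw [Matrix.matrix_eq_sum_single M]
  refine Finset.sum_congr rfl fun i _ => Finset.sum_congr rfl fun j _ => ?_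
  ext k l
  simp [Matrix.single_apply, Matrix.scalar_apply, Matrix.mul_diagonal]

def twoEquiv : C (w2 w) ≃ₐ[ℝ] Matrix (Fin 2) (Fin 2) (C w) :=
  AlgEquiv.ofAlgHom (fwd w) (bwd w) (fwd_bwd w) (bwd_fwd w)

end two

section sig

def sg (p q : ℕ) : Fin p ⊕ Fin q → ℝ := Sum.elim (fun _ => 1) (fun _ => -1)

def gEquiv (p q : ℕ) : C (sg p q) ≃ₐ[ℝ] G p q :=
  reindex (sg p q) _ finSumFinEquiv (by rintro (i | i) <;> simp [sg])

def sumEquiv (p q a b : ℕ) : C (Sum.elim (sg p q) (sg a b)) ≃ₐ[ℝ] C (sg (p + a) (q + b)) :=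
  reindex _ _ ((Equiv.sumSumSumComm _ _ _ _).trans (Equiv.sumCongr finSumFinEquiv finSumFinEquiv))
    (by rintro ((i | i) | (i | i)) <;> simp [sg])

def stepTwo (p q : ℕ) : C (sg (p + 1) (q + 1)) ≃ₐ[ℝ] Matrix (Fin 2) (Fin 2) (C (sg p q)) :=
  (sumEquiv p q 1 1).symm.trans (twoEquiv (sg p q))

def stepFour (p q : ℕ) : C (sg (p + 4) q) ≃ₐ[ℝ] C (sg p (q + 4)) :=
  ((sumEquiv p q 4 0).symm.trans (reindex (Sum.elim (sg p q) (sg 4 0))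
    (Sum.elim (sg p q) (fun _ : Fin 4 => (1 : ℝ)))
    (Equiv.sumCongr (Equiv.refl _) (Equiv.sumEmpty _ _))
    (by rintro (i | (i | i)) <;> simp [sg]; exact i.elim0))).trans
  ((fourEquiv (sg p q)).trans
    ((reindex (Sum.elim (sg p q) (fun _ : Fin 4 => (-1 : ℝ))) (Sum.elim (sg p q) (sg 0 4))
    (Equiv.sumCongr (Equiv.refl _) (Equiv.emptySum _ _).symm)
    (by rintro (i | i) <;> simp [sg])).trans (sumEquiv p q 0 4)))

def matMat (n : ℕ) {A B : Type} [Ring A] [Algebra ℝ A] [Ring B] [Algebra ℝ B]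
    (f : A ≃ₐ[ℝ] Matrix (Fin n) (Fin n) B) :
    Matrix (Fin 2) (Fin 2) A ≃ₐ[ℝ] Matrix (Fin (2 * n)) (Fin (2 * n)) B :=
  (f.mapMatrix.trans (Matrix.compAlgEquiv (Fin 2) (Fin n) B ℝ)).trans
    (Matrix.reindexAlgEquiv ℝ B finProdFinEquiv)

end sig
end Bott

open Bott in
theorem G_p8q_iso_matrix16 (p q : ℕ) :
    Nonempty (G (p + 8) q ≃ₐ[ℝ] Matrix (Fin 16) (Fin 16) (G p q)) := by
  have e1 := (stepTwo p q).trans (gEquiv p q).mapMatrix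
  have e2 := (stepTwo (p + 1) (q + 1)).trans (matMat 2 e1)
  have e3 := (stepTwo (p + 2) (q + 2)).trans (matMat _ e2)
  have e4 := (stepTwo (p + 3) (q + 3)).trans (matMat _ e3)
  exact ⟨((gEquiv (p + 8) q).symm.trans (stepFour (p + 4) q)).trans e4⟩
end
end

section
/- For all natural numbers p and q, the complexification ℂ ⊗_ℝ G_{p,q} is isomorphic as a ℂ-algebra to the complex geometric algebra G_{p+q}(ℂ). -/
noncomputable section

/-- The quadratic form `Q_n(z) = Σ_{i<n} z_i²` on `Fin n → ℂ`. -/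
def QC (n : ℕ) : QuadraticForm ℂ (Fin n → ℂ) :=
  QuadraticMap.weightedSumSquares ℂ (fun _ : Fin n => (1 : ℂ))

/-- The complex geometric algebra `G_n(ℂ)`. -/
abbrev GC (n : ℕ) : Type := CliffordAlgebra (QC n)

open scoped TensorProduct in
/-- The diagonal scaling by `1` (first `p` coordinates) and `I` (the others). -/
def sc (p q : ℕ) (i : Fin (p + q)) : ℂˣ :=
  if (i : ℕ) < p then 1 else Units.mk0 Complex.I Complex.I_ne_zero

open scoped TensorProduct in
def linE (p q : ℕ) : (ℂ ⊗[ℝ] (Fin (p + q) → ℝ)) ≃ₗ[ℂ] (Fin (p + q) → ℂ) :=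
  (TensorProduct.piScalarRight ℝ ℂ ℂ (Fin (p + q))).trans
    (LinearEquiv.piCongrRight fun i => LinearEquiv.smulOfUnit (sc p q i))

theorem smulOfUnit_app (u : ℂˣ) (z : ℂ) :
    (LinearEquiv.smulOfUnit u : ℂ ≃ₗ[ℂ] ℂ) z = (u : ℂ) * z := rfl

theorem comp_linE (p q : ℕ) :
    (QC (p + q)).comp (linE p q).toLinearMap = (Q p q).baseChange ℂ := by
  apply baseChange_ext
  intro v
  rw [QuadraticForm.baseChange_tmul]
  simp only [QuadraticMap.comp_apply, QC, Q, QuadraticMap.weightedSumSquares_apply, linE]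
  simp only [LinearEquiv.coe_coe, LinearEquiv.trans_apply, TensorProduct.piScalarRight_apply,
    TensorProduct.piScalarRightHom_tmul, LinearEquiv.piCongrRight_apply, Finset.sum_smul,
    smulOfUnit_app]
  refine Finset.sum_congr rfl fun i _ => ?_
  unfold sc
  split_ifs
  · simp
  · simp
    linear_combination ((v i : ℂ) * (v i : ℂ)) * Complex.I_mul_I

open scoped TensorProduct in
theorem complexification_G_iso_GC (p q : ℕ) :
    Nonempty ((ℂ ⊗[ℝ] G p q) ≃ₐ[ℂ] GC (p + q)) := by
  refine ⟨(CliffordAlgebra.equivBaseChange ℂ (Q p q)).symm.trans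
    (CliffordAlgebra.equivOfIsometry ⟨linE p q, fun m => ?_⟩)⟩
  rw [← comp_linE]
  rfl
end
end
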